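/- Let G : ℝ² → ℝ² be a lift of a homeomorphism g of the two-torus homotopic to the identity, let Û ⊆ ℝ² be bounded and connected with G(Û) ∩ Û ≠ ∅, let λ ≠ 0, v ∈ ℝ² \ {0} and a < b, and suppose ρ_Û(G) = L_{λ,v}[a,b]. Then there exist constants c > 0 and N' ∈ ℕ such that for all n ≥ N': sup_{z∈Û} ⟨G^n(z), v^⊥⟩ − inf_{z∈Û} ⟨G^n(z), v^⊥⟩ > c·n. -/

import Mathlib

noncomputable section
open Filter Topology Metric Set MeasureTheory

/-- Euclidean space `ℝ^d`. -/
abbrev E (d : ℕ) := EuclideanSpace ℝ (Fin d)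

/-- The integer lattice `ℤ^d` as an additive subgroup of `ℝ^d`. -/
def ZLat (d : ℕ) : AddSubgroup (E d) where
  carrier := {z | ∀ i, ∃ m : ℤ, z i = (m : ℝ)}
  zero_mem' := fun i => ⟨0, by simp⟩
  add_mem' := by
    intro x y hx hy i
    obtain ⟨m, hm⟩ := hx i
    obtain ⟨n, hn⟩ := hy i
    exact ⟨m + n, by simp [PiLp.add_apply, hm, hn]⟩
  neg_mem' := by
    intro x hx i
    obtain ⟨m, hm⟩ := hx i
    exact ⟨-m, by simp [PiLp.neg_apply, hm]⟩

/-- The torus `T^d = ℝ^d / ℤ^d`. -/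
abbrev T (d : ℕ) := E d ⧸ ZLat d

/-- The canonical projection `π : ℝ^d → T^d`. -/
def tpi (d : ℕ) : E d → T d := QuotientAddGroup.mk

/-- The set of rotation vectors of orbit segments starting in `W ⊆ ℝ^d`:
`{ρ | ∃ nᵢ → ∞, zᵢ ∈ W, (F^{nᵢ}(zᵢ) - zᵢ)/nᵢ → ρ}`. -/
def rotRel {d : ℕ} (F : E d → E d) (W : Set (E d)) : Set (E d) :=
  {ρ | ∃ (n : ℕ → ℕ) (z : ℕ → E d),
    Tendsto n atTop atTop ∧ (∀ i, z i ∈ W) ∧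
    Tendsto (fun i => (n i : ℝ)⁻¹ • (F^[n i] (z i) - z i)) atTop (𝓝 ρ)}

/-- The Misiurewicz–Ziemian rotation set `ρ(F)` of a lift `F`. -/
def rotSet {d : ℕ} (F : E d → E d) : Set (E d) := rotRel F Set.univ

/-- The rotation subset `ρ_U(F)` for `U ⊆ T^d` (starting points in `π⁻¹(U)`). -/
def rotU {d : ℕ} (F : E d → E d) (U : Set (T d)) : Set (E d) :=
  rotRel F (tpi d ⁻¹' U)

/-- `F` is a lift of the torus homeomorphism `f` (which is then homotopic to the
identity, as expressed by commutation with the deck translations). -/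
def IsLift {d : ℕ} (F : E d ≃ₜ E d) (f : T d ≃ₜ T d) : Prop :=
  (∀ z : E d, tpi d (F z) = f (tpi d z)) ∧ ∀ z : E d, ∀ m ∈ ZLat d, F (z + m) = F z + m

/-- `U ⊆ T^d` is bounded: the connected components of `π⁻¹(U)` are bounded. -/
def BoundedSet {d : ℕ} (U : Set (T d)) : Prop :=
  ∀ z ∈ tpi d ⁻¹' U, Bornology.IsBounded (connectedComponentIn (tpi d ⁻¹' U) z)

/-- `U ⊆ T^d` is recurrent: `f^n(U) ∩ U ≠ ∅` for infinitely many `n ≥ 1`. -/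
def Recurrent {d : ℕ} (f : T d ≃ₜ T d) (U : Set (T d)) : Prop :=
  {n : ℕ | 1 ≤ n ∧ ((⇑f)^[n] '' U ∩ U).Nonempty}.Infinite

/-- The Euclidean scalar product `⟨z, v⟩` in `ℝ²`. -/
def sdot (v z : E 2) : ℝ := z 0 * v 0 + z 1 * v 1

/-- `⟨z, v^⊥⟩` where `v^⊥ = (-v₂, v₁)`. -/
def pdot (v z : E 2) : ℝ := z 1 * v 0 - z 0 * v 1

/-- The affine line `L_{λ,v} = λv + {v}^⊥ = {z | ⟨z,v⟩ = λ⟨v,v⟩}`. -/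
def lineL (lam : ℝ) (v : E 2) : Set (E 2) := {z | sdot v z = lam * sdot v v}

/-- A vector of `ℝ²` is rational if both coordinates are rational. -/
def RatVec (z : E 2) : Prop := (∃ q : ℚ, z 0 = (q : ℝ)) ∧ ∃ q : ℚ, z 1 = (q : ℝ)

/-- The segment `L_{λ,v}[a,b] = {z ∈ L_{λ,v} | a⟨z,v⟩ ≤ ⟨z,v^⊥⟩ ≤ b⟨z,v⟩}`. -/
def lineSeg (lam : ℝ) (v : E 2) (a b : ℝ) : Set (E 2) :=
  {z ∈ lineL lam v | a * sdot v z ≤ pdot v z ∧ pdot v z ≤ b * sdot v z}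

/-- The cone `C_v[a,b] = {z | a⟨z,v⟩ ≤ ⟨z,v^⊥⟩ ≤ b⟨z,v⟩}`. -/
def coneC (v : E 2) (a b : ℝ) : Set (E 2) :=
  {z | a * sdot v z ≤ pdot v z ∧ pdot v z ≤ b * sdot v z}

open scoped unitInterval Real

/-!
In the coordinates `x = ⟨z, v⟩`, `y = ⟨z, v^⊥⟩` all orbits starting in `U` drift in the direction
`x` with the same speed `L ≠ 0`, say `L > 0`. Suppose that `y ≤ M` on `G^n(U)`, and let `m` be a
lattice vector with abscissa about `nL` and ordinate slightly above `M`. As long as they stay near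
the abscissa `nL`, the forward orbit of `G^n(U)` lies below that of `U + m`; being disjoint by
injectivity, the two orbits keep this order further to the right, because two crossing continua in
the plane intersect. So every late point `p` of the orbit of `U` lies below a point `q + m` with `q`
in the orbit of `U`, and descending along `p ↦ q` shows that `m_x y - m_y x` is bounded above on
this orbit. Hence rotation vectors have slope at most `m_y / m_x ≈ M / (nL)`, which means that
`sup y ≥ n ρ_y - o(n)` on `G^n(U)` for every rotation vector `ρ`. By symmetry
`inf y ≤ n ρ'_y + o(n)`, and two different rotation vectors `ρ`, `ρ'` force linear spreading.
-/

/-! ### Crossing continua in the plane -/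

theorem exists_int_forall_abs_sub_lt {A : Type*} [TopologicalSpace A] [PreconnectedSpace A]
    [Nonempty A] {θ : A → ℝ} (hθ : Continuous θ) {α : ℝ} (hcos : ∀ t, 0 < Real.cos (θ t - α)) :
    ∃ k : ℤ, ∀ t, |θ t - (α + k * (2 * π))| < π / 2 := by
  obtain ⟨t₀⟩ := ‹Nonempty A›
  have hcos' (k : ℤ) (t : A) : 0 < Real.cos |θ t - (α + k * (2 * π))| := by
    rw [Real.cos_abs, ← sub_sub, Real.cos_sub_int_mul_two_pi]
    exact hcos t
  obtain ⟨k, hk, -⟩ := existsUnique_sub_zsmul_mem_Ico Real.two_pi_pos (θ t₀) (α - π)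
  rw [zsmul_eq_mul] at hk
  have h_start : |θ t₀ - (α + k * (2 * π))| < π / 2 := by
    by_contra! hge
    have hle : |θ t₀ - (α + k * (2 * π))| ≤ π :=
      abs_le.2 ⟨by linarith [hk.1], by linarith [hk.2]⟩
    have hneg := Real.cos_nonpos_of_pi_div_two_le_of_le hge (by linarith [Real.pi_pos])
    exact hneg.not_gt (hcos' k t₀)
  refine ⟨k, fun t => ?_⟩
  by_contra! hge
  obtain ⟨s, hs : |θ s - (α + k * (2 * π))| = π / 2⟩ := mem_range_of_exists_le_of_exists_ge
    (hθ.sub continuous_const).abs ⟨t₀, h_start.le⟩ ⟨t, hge⟩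
  have hzero := hcos' k s
  rw [hs, Real.cos_pi_div_two] at hzero
  exact hzero.false

theorem int_eq_of_abs_sub_lt {φ α β : ℝ} {j k : ℤ} (hαβ : β = α + π / 2)
    (hj : |φ - (α + j * (2 * π))| < π / 2) (hk : |φ - (β + k * (2 * π))| < π / 2) : j = k := by
  rw [abs_lt] at hj hk
  have hlt : (j : ℝ) - k < 1 := by nlinarith [hj.2, hk.1, Real.pi_pos]
  have hgt : -1 < (j : ℝ) - k := by nlinarith [hj.1, hk.2, Real.pi_pos]
  norm_cast at hlt hgt
  omega

theorem exists_continuous_argument {X : Type*} [TopologicalSpace X] [SimplyConnectedSpace X]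
    [LocallyPathConnectedSpace X] {f : X → ℂ} (hf : Continuous f) (h0 : ∀ x, f x ≠ 0) :
    ∃ θ : X → ℝ, Continuous θ ∧
      ∀ x, (f x).re = ‖f x‖ * Real.cos (θ x) ∧ (f x).im = ‖f x‖ * Real.sin (θ x) := by
  have hsimply : IsSimplyConnected (univ : Set X) :=
    (Homeomorph.Set.univ X).toHomotopyEquiv.simplyConnectedSpace
  obtain ⟨F, hF, hexp⟩ := Complex.exists_continuousOn_eqOn_exp_comp hsimply isOpen_univ
    hf.continuousOn (by rintro ⟨x, -, hx⟩; exact h0 x hx)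
  refine ⟨fun x => (F x).im, Complex.continuous_im.comp (continuousOn_univ.1 hF), fun x => ?_⟩
  have hx : f x = Complex.exp (F x) := (hexp (mem_univ x)).symm
  rw [hx, Complex.norm_exp, Complex.exp_re, Complex.exp_im]
  exact ⟨rfl, rfl⟩

theorem exists_eq_zero_of_edge_signs {f : I × I → ℂ} (hf : Continuous f)
    (hleft : ∀ t, (f (0, t)).im < 0) (hright : ∀ t, 0 < (f (1, t)).im)
    (hbot : ∀ s, 0 < (f (s, 0)).re) (htop : ∀ s, (f (s, 1)).re < 0) : ∃ p, f p = 0 := by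
  by_contra! h0
  let proj : ℝ × ℝ → I × I := Prod.map (projIcc 0 1 zero_le_one) (projIcc 0 1 zero_le_one)
  have hproj : Continuous proj := continuous_projIcc.prodMap continuous_projIcc
  obtain ⟨θ', hθ', harg⟩ := exists_continuous_argument (hf.comp hproj) fun x => h0 (proj x)
  let θ : I × I → ℝ := fun p => θ' (p.1, p.2)
  have hθ : Continuous θ := by fun_prop
  have hproj_coe (p : I × I) : proj (p.1, p.2) = p := by simp [proj]
  have hre (p : I × I) : (f p).re = ‖f p‖ * Real.cos (θ p) := by
    simpa only [Function.comp_apply, hproj_coe] using (harg (p.1, p.2)).1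
  have him (p : I × I) : (f p).im = ‖f p‖ * Real.sin (θ p) := by
    simpa only [Function.comp_apply, hproj_coe] using (harg (p.1, p.2)).2
  have hnorm (p : I × I) : 0 < ‖f p‖ := norm_pos_iff.2 (h0 p)
  simp only [hre, him, ← smul_eq_mul, smul_neg_iff_of_pos_left,
    smul_pos_iff_of_pos_left, hnorm] at hleft hright hbot htop
  -- Counterclockwise from the bottom, the edges confine the argument to consecutive quarter turns,
  -- so that it gains a full turn along the boundary although it is single valued at the corners.
  obtain ⟨kb, hkb⟩ := exists_int_forall_abs_sub_lt (θ := fun s => θ (s, 0)) (α := 0)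
    (by fun_prop) (by simpa using hbot)
  obtain ⟨kr, hkr⟩ := exists_int_forall_abs_sub_lt (θ := fun t => θ (1, t)) (α := π / 2)
    (by fun_prop) (by simpa [Real.cos_sub_pi_div_two] using hright)
  obtain ⟨kt, hkt⟩ := exists_int_forall_abs_sub_lt (θ := fun s => θ (s, 1)) (α := π)
    (by fun_prop) (by simpa [Real.cos_sub_pi] using htop)
  obtain ⟨kl, hkl⟩ := exists_int_forall_abs_sub_lt (θ := fun t => θ (0, t)) (α := π + π / 2)
    (by fun_prop) (by simpa [← sub_sub, Real.cos_sub_pi_div_two, Real.sin_sub_pi] using hleft)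
  have hbr : kb = kr := int_eq_of_abs_sub_lt (by ring) (hkb 1) (hkr 0)
  have hrt : kr = kt := int_eq_of_abs_sub_lt (by ring) (hkr 1) (hkt 1)
  have htl : kt = kl := int_eq_of_abs_sub_lt rfl (hkt 0) (hkl 1)
  have hlb : kl = kb - 1 := int_eq_of_abs_sub_lt (β := 2 * π) (by ring) (hkl 0) <| by
    convert hkb 0 using 3
    push_cast
    ring
  omega

theorem exists_path_apply_eq_of_cross {b t l r : ℝ × ℝ} (α : Path b t) (β : Path l r)
    (hα : ∀ s, l.1 < (α s).1 ∧ (α s).1 < r.1) (hβ : ∀ s, b.2 < (β s).2 ∧ (β s).2 < t.2) :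
    ∃ s s', α s = β s' := by
  let f : I × I → ℂ := fun p =>
    Complex.equivRealProdCLM.symm ((α p.1).1 - (β p.2).1, (α p.1).2 - (β p.2).2)
  obtain ⟨p, hp⟩ := exists_eq_zero_of_edge_signs (f := f) (by fun_prop)
    (fun t => by simpa [f] using (hβ t).1) (fun t => by simpa [f] using (hβ t).2)
    (fun s => by simpa [f] using (hα s).1) (fun s => by simpa [f] using (hα s).2)
  have hsub : α p.1 - β p.2 = 0 := Complex.equivRealProdCLM.symm.map_eq_zero_iff.1 hp
  exact ⟨p.1, p.2, sub_eq_zero.1 hsub⟩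

theorem isPathConnected_thickening {F : Type*} [NormedAddCommGroup F] [NormedSpace ℝ F]
    {V : Set F} (hV : IsConnected V) {δ : ℝ} (hδ : 0 < δ) : IsPathConnected (thickening δ V) := by
  rw [← isOpen_thickening.isConnected_iff_isPathConnected]
  have hsub := self_subset_thickening hδ V
  obtain ⟨x, hx⟩ := hV.nonempty
  refine ⟨⟨x, hsub hx⟩, isPreconnected_of_forall x fun y hy => ?_⟩
  obtain ⟨z, hz, hyz⟩ := mem_thickening_iff.1 hy
  exact ⟨V ∪ ball z δ, union_subset hsub (ball_subset_thickening hz δ), .inl hx, .inr hyz,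
    hV.isPreconnected.union z hz (mem_ball_self hδ) (convex_ball z δ).isPreconnected⟩

theorem inter_nonempty_of_cross {V H : Set (ℝ × ℝ)} (hVk : IsCompact V) (hV : IsConnected V)
    (hHk : IsCompact H) (hH : IsConnected H) {b t l r : ℝ × ℝ} (hb : b ∈ V) (ht : t ∈ V)
    (hl : l ∈ H) (hr : r ∈ H) (hVlr : ∀ w ∈ V, l.1 < w.1 ∧ w.1 < r.1)
    (hHbt : ∀ h ∈ H, b.2 < h.2 ∧ h.2 < t.2) : (V ∩ H).Nonempty := by
  by_contra hVH
  have hdisj : Disjoint V H := disjoint_iff_inter_eq_empty.2 (not_nonempty_iff_eq_empty.1 hVH)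
  obtain ⟨δ, hδ, hδdisj⟩ := hdisj.exists_thickenings hVk hHk.isClosed
  obtain ⟨δV, hδV, hsubV⟩ := hVk.exists_thickening_subset_open
    (isOpen_Ioo.preimage continuous_fst) hVlr
  obtain ⟨δH, hδH, hsubH⟩ := hHk.exists_thickening_subset_open
    (isOpen_Ioo.preimage continuous_snd) hHbt
  have hεV := lt_min hδ hδV
  have hεH := lt_min hδ hδH
  obtain ⟨α, hα⟩ := (isPathConnected_thickening hV hεV).joinedIn
    b (self_subset_thickening hεV V hb) t (self_subset_thickening hεV V ht)
  obtain ⟨β, hβ⟩ := (isPathConnected_thickening hH hεH).joinedIn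
    l (self_subset_thickening hεH H hl) r (self_subset_thickening hεH H hr)
  obtain ⟨s, s', hss'⟩ := exists_path_apply_eq_of_cross α β
    (fun s => hsubV (thickening_mono (min_le_right _ _) V (hα s)))
    (fun s => hsubH (thickening_mono (min_le_right _ _) H (hβ s)))
  exact hδdisj.ne_of_mem (thickening_mono (min_le_left _ _) V (hα s))
    (thickening_mono (min_le_left _ _) H (hβ s')) hss'

theorem exists_mem_above {V H : Set (ℝ × ℝ)} (hVk : IsCompact V) (hV : IsConnected V)
    (hHk : IsCompact H) (hH : IsConnected H) (hdisj : Disjoint V H) {p q l r : ℝ × ℝ}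
    (hp : p ∈ V) (hq : q ∈ V) (hl : l ∈ H) (hr : r ∈ H) (hlp : l.1 < p.1) (hql : q.2 < l.2)
    (hqH : ∀ h ∈ H, h.1 = q.1 → q.2 < h.2) (hlV : ∀ w ∈ V, w.2 = l.2 → l.1 < w.1)
    (hVr : ∀ w ∈ V, w.1 < r.1) : ∃ h ∈ H, h.1 = p.1 ∧ p.2 ≤ h.2 := by
  by_contra! hpH
  -- Prolonging `V` upwards from `p` and downwards from `q`, and `H` leftwards from `l`, makes the
  -- two sets cross without creating intersection points.
  obtain ⟨M, hM⟩ : ∃ M, ∀ z ∈ V ∪ H, |z.1| < M ∧ |z.2| < M := by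
    obtain ⟨M, -, hM⟩ := (hVk.union hHk).isBounded.subset_ball_lt 0 0
    exact ⟨M, fun z hz => by simpa [Prod.norm_def] using hM hz⟩
  simp only [abs_lt] at hM
  have hMV {w} (hw : w ∈ V) := hM w (.inl hw)
  have hMH {h} (hh : h ∈ H) := hM h (.inr hh)
  let up : Set (ℝ × ℝ) := {p.1} ×ˢ Icc p.2 M
  let down : Set (ℝ × ℝ) := {q.1} ×ˢ Icc (-M) q.2
  let left : Set (ℝ × ℝ) := Icc (-M) l.1 ×ˢ {l.2}
  have hpM : p.2 ≤ M := (hMV hp).2.2.le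
  have hqM : -M ≤ q.2 := (hMV hq).2.1.le
  have hlM : -M ≤ l.1 := (hMH hl).1.1.le
  have hVup : IsConnected (V ∪ up) :=
    hV.union ⟨p, hp, rfl, left_mem_Icc.2 hpM⟩ (isConnected_singleton.prod (isConnected_Icc hpM))
  have hV' : IsConnected (V ∪ up ∪ down) :=
    hVup.union ⟨q, .inl hq, rfl, right_mem_Icc.2 hqM⟩
      (isConnected_singleton.prod (isConnected_Icc hqM))
  have hH' : IsConnected (H ∪ left) :=
    hH.union ⟨l, hl, right_mem_Icc.2 hlM, rfl⟩ ((isConnected_Icc hlM).prod isConnected_singleton)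
  have hVk' : IsCompact (V ∪ up ∪ down) :=
    (hVk.union (isCompact_singleton.prod isCompact_Icc)).union
      (isCompact_singleton.prod isCompact_Icc)
  have hHk' : IsCompact (H ∪ left) := hHk.union (isCompact_Icc.prod isCompact_singleton)
  obtain ⟨z, (hzV | ⟨hz1, hz2⟩) | ⟨hz1, hz2⟩, hzH | ⟨hz3, hz4⟩⟩ := inter_nonempty_of_cross
    hVk' hV' hHk' hH' (b := (q.1, -M)) (t := (p.1, M)) (l := (-M, l.2)) (r := r)
    (.inr ⟨rfl, left_mem_Icc.2 hqM⟩) (.inl (.inr ⟨rfl, right_mem_Icc.2 hpM⟩))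
    (.inr ⟨left_mem_Icc.2 hlM, rfl⟩) (.inl hr)
    (by
      rintro w ((hw | ⟨hw, -⟩) | ⟨hw, -⟩)
      · exact ⟨(hMV hw).1.1, hVr w hw⟩
      · exact hw ▸ ⟨(hMV hp).1.1, hVr p hp⟩
      · exact hw ▸ ⟨(hMV hq).1.1, hVr q hq⟩)
    (by
      rintro h (hh | ⟨-, hh⟩)
      · exact (hMH hh).2
      · exact hh ▸ (hMH hl).2)
  · exact hdisj.ne_of_mem hzV hzH rfl
  · exact (hlV z hzV hz4).not_ge hz3.2
  · exact (hpH z hzH hz1).not_ge hz2.1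
  · exact hlp.not_ge (hz1 ▸ hz3.2)
  · exact (hqH z hzH hz1).not_ge hz2.2
  · exact hql.not_ge (hz4 ▸ hz2.2)

/-! ### Forward orbits -/

section ForwardOrbit

variable {α : Type*}

/-- The union of all forward images `f^[k] '' A`, `k ≥ 0`: the part of the space swept out by the
set `A` under iteration of `f`. -/
def forwardOrbit (f : α → α) (A : Set α) : Set α := ⋃ k, f^[k] '' A

theorem mem_forwardOrbit {f : α → α} {A : Set α} {p : α} :
    p ∈ forwardOrbit f A ↔ ∃ k, ∃ a ∈ A, f^[k] a = p := by
  simp [forwardOrbit]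

theorem forwardOrbit_subset_union (f : α → α) (A : Set α) (n : ℕ) :
    forwardOrbit f A ⊆ (⋃ k ∈ Iio n, f^[k] '' A) ∪ forwardOrbit f (f^[n] '' A) := by
  intro p hp
  obtain ⟨k, a, ha, rfl⟩ := mem_forwardOrbit.1 hp
  obtain hkn | hnk := lt_or_ge k n
  · exact .inl (mem_biUnion hkn (mem_image_of_mem _ ha))
  · refine .inr (mem_forwardOrbit.2 ⟨k - n, f^[n] a, mem_image_of_mem _ ha, ?_⟩)
    rw [← Function.iterate_add_apply, Nat.sub_add_cancel hnk]

theorem forwardOrbit_image_of_commute {f T : α → α} (hT : Function.Commute f T) (A : Set α) :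
    forwardOrbit f (T '' A) = T '' forwardOrbit f A := by
  simp only [forwardOrbit, image_iUnion, image_image, (hT.iterate_left _).eq]

theorem image_inter_image_nonempty_of_commute {f T : α → α} (hT : Function.Commute f T)
    {A : Set α} (hA : (f '' A ∩ A).Nonempty) : (f '' (T '' A) ∩ T '' A).Nonempty := by
  obtain ⟨_, ⟨a, ha, rfl⟩, hfa⟩ := hA
  exact ⟨T (f a), ⟨T a, mem_image_of_mem T ha, hT.eq a⟩, mem_image_of_mem T hfa⟩

theorem disjoint_forwardOrbit {f : α → α} (hf : Function.Injective f) {A B : Set α}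
    (hAB : Disjoint A (forwardOrbit f B)) (hBA : Disjoint B (forwardOrbit f A)) :
    Disjoint (forwardOrbit f A) (forwardOrbit f B) := by
  rw [disjoint_left]
  intro p hpA hpB
  obtain ⟨j, a, ha, rfl⟩ := mem_forwardOrbit.1 hpA
  obtain ⟨k, b, hb, hkj⟩ := mem_forwardOrbit.1 hpB
  obtain ⟨i, rfl⟩ | ⟨i, rfl⟩ := le_total j k |>.imp Nat.exists_eq_add_of_le Nat.exists_eq_add_of_le
  · rw [Function.iterate_add_apply] at hkj
    exact disjoint_left.1 hAB ha (mem_forwardOrbit.2 ⟨i, b, hb, hf.iterate j hkj⟩)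
  · rw [Function.iterate_add_apply] at hkj
    exact disjoint_left.1 hBA hb (mem_forwardOrbit.2 ⟨i, a, ha, (hf.iterate k hkj).symm⟩)

theorem exists_isCompact_isConnected_subset_forwardOrbit [TopologicalSpace α] {f : α → α}
    (hf : Continuous f) {A : Set α} (hAk : IsCompact A) (hA : IsConnected A)
    (hret : (f '' A ∩ A).Nonempty) {p : α} (hp : p ∈ forwardOrbit f A) :
    ∃ V ⊆ forwardOrbit f A, IsCompact V ∧ IsConnected V ∧ A ⊆ V ∧ p ∈ V := by
  obtain ⟨k, hk⟩ := mem_iUnion.1 hp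
  refine ⟨⋃ i ∈ Iic k, f^[i] '' A, iUnion₂_subset fun i _ => subset_iUnion (f^[·] '' A) i,
    (finite_Iic k).isCompact_biUnion fun i _ => hAk.image (hf.iterate i),
    IsConnected.biUnion_of_chain nonempty_Iic ordConnected_Iic
      (fun i _ => hA.image _ (hf.iterate i).continuousOn) fun i _ _ => ?_,
    fun a ha => mem_biUnion (Nat.zero_le k) ⟨a, ha, rfl⟩, mem_biUnion self_mem_Iic hk⟩
  obtain ⟨_, ⟨a, ha, rfl⟩, hfa⟩ := hret
  exact ⟨f^[i] (f a), mem_image_of_mem _ hfa, a, ha, rfl⟩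

theorem exists_mem_forwardOrbit_above [TopologicalSpace α] {f : α → α} (hf : Continuous f)
    (hinj : Function.Injective f) {e : α → ℝ × ℝ} (he : Continuous e)
    (he_inj : Function.Injective e)
    {A B : Set α} (hAk : IsCompact A) (hA : IsConnected A) (hBk : IsCompact B) (hB : IsConnected B)
    (hAret : (f '' A ∩ A).Nonempty) (hBret : (f '' B ∩ B).Nonempty) {sA sB yA yB : ℝ}
    (hAe : ∀ a ∈ A, (e a).1 ≤ sA ∧ (e a).2 ≤ yA) (hBe : ∀ b ∈ B, (e b).1 ≤ sB ∧ yB ≤ (e b).2)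
    (hy : yA < yB) (hAlow : ∀ p ∈ forwardOrbit f A, (e p).1 ≤ sB → (e p).2 < yB)
    (hBhigh : ∀ q ∈ forwardOrbit f B, (e q).1 ≤ sA → yA < (e q).2)
    (hBfar : ∀ M, ∃ q ∈ forwardOrbit f B, M < (e q).1) {p : α} (hp : p ∈ forwardOrbit f A)
    (hsp : sB < (e p).1) : ∃ q ∈ forwardOrbit f B, (e q).1 = (e p).1 ∧ (e p).2 ≤ (e q).2 := by
  have hdisj : Disjoint (forwardOrbit f A) (forwardOrbit f B) :=
    disjoint_forwardOrbit hinj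
      (disjoint_left.2 fun a ha haB => (hBhigh a haB (hAe a ha).1).not_ge (hAe a ha).2)
      (disjoint_left.2 fun b hb hbA => (hAlow b hbA (hBe b hb).1).not_ge (hBe b hb).2)
  obtain ⟨V, hVsub, hVk, hV, hAV, hpV⟩ :=
    exists_isCompact_isConnected_subset_forwardOrbit hf hAk hA hAret hp
  obtain ⟨M, hM⟩ : BddAbove ((fun z => (e z).1) '' V) :=
    hVk.bddAbove_image (by fun_prop)
  obtain ⟨r, hr, hMr⟩ := hBfar M
  obtain ⟨H, hHsub, hHk, hH, hBH, hrH⟩ :=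
    exists_isCompact_isConnected_subset_forwardOrbit hf hBk hB hBret hr
  obtain ⟨a, ha⟩ := hA.nonempty
  obtain ⟨b, hb⟩ := hB.nonempty
  have hVHdisj : Disjoint (e '' V) (e '' H) :=
    (disjoint_image_iff he_inj).2 (hdisj.mono hVsub hHsub)
  obtain ⟨-, ⟨q, hqH, rfl⟩, hq⟩ := exists_mem_above (hVk.image he) (hV.image e he.continuousOn)
    (hHk.image he) (hH.image e he.continuousOn) hVHdisj (mem_image_of_mem e hpV)
    (mem_image_of_mem e (hAV ha)) (mem_image_of_mem e (hBH hb)) (mem_image_of_mem e hrH)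
    ((hBe b hb).1.trans_lt hsp) ((hAe a ha).2.trans_lt (hy.trans_le (hBe b hb).2))
    (forall_mem_image.2 fun h hh ha' =>
      (hAe a ha).2.trans_lt (hBhigh h (hHsub hh) (ha'.trans_le (hAe a ha).1)))
    (forall_mem_image.2 fun w hw hb' => lt_of_not_ge fun hwb =>
      (hAlow w (hVsub hw) (hwb.trans (hBe b hb).1)).not_ge ((hBe b hb).2.trans_eq hb'.symm))
    (forall_mem_image.2 fun w hw => (hM (mem_image_of_mem _ hw)).trans_lt hMr)
  exact ⟨q, hHsub hqH, hq⟩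

end ForwardOrbit

/-! ### Rotation vectors and drift -/

theorem exists_mem_ZLat_norm_sub_le (d : ℕ) : ∃ R, ∀ z : E d, ∃ m ∈ ZLat d, ‖z - m‖ ≤ R := by
  refine ⟨√d, fun z => ⟨WithLp.toLp 2 fun i => (⌊z i⌋ : ℝ), fun i => ⟨⌊z i⌋, rfl⟩, ?_⟩⟩
  rw [EuclideanSpace.norm_eq]
  refine Real.sqrt_le_sqrt ?_
  calc ∑ i, ‖z i - ⌊z i⌋‖ ^ 2 ≤ ∑ _i : Fin d, (1 : ℝ) := by
        gcongr with i
        rw [Int.self_sub_floor, Real.norm_of_nonneg (Int.fract_nonneg _)]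
        exact pow_le_one₀ (Int.fract_nonneg _) (Int.fract_lt_one _).le
    _ = d := by simp

theorem exists_mem_ZLat_abs_sub_le (e : E 2 ≃L[ℝ] ℝ × ℝ) :
    ∃ R, ∀ x y, ∃ m ∈ ZLat 2, |(e m).1 - x| ≤ R ∧ |(e m).2 - y| ≤ R := by
  obtain ⟨R, hR⟩ := exists_mem_ZLat_norm_sub_le 2
  refine ⟨‖e.toContinuousLinearMap‖ * R, fun x y => ?_⟩
  obtain ⟨m, hm, hmR⟩ := hR (e.symm (x, y))
  have hle : ‖e m - (x, y)‖ ≤ ‖e.toContinuousLinearMap‖ * R := by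
    rw [norm_sub_rev, ← e.apply_symm_apply (x, y), ← map_sub]
    exact e.toContinuousLinearMap.le_opNorm_of_le hmR
  exact ⟨m, hm, norm_prod_le_iff.1 hle⟩

theorem exists_norm_apply_sub_le {d : ℕ} {G : E d → E d} (hG : Continuous G)
    (hper : ∀ z, ∀ m ∈ ZLat d, G (z + m) = G z + m) : ∃ C, ∀ z, ‖G z - z‖ ≤ C := by
  obtain ⟨R, hR⟩ := exists_mem_ZLat_norm_sub_le d
  obtain ⟨C, hC⟩ := (isCompact_closedBall (0 : E d) R).exists_bound_of_continuousOn
    (hG.sub continuous_id).continuousOn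
  refine ⟨C, fun z => ?_⟩
  obtain ⟨m, hm, hzm⟩ := hR z
  have hshift : G z - z = G (z - m) - (z - m) := by
    rw [← sub_add_cancel z m, hper _ m hm, add_sub_add_right_eq_sub, sub_add_cancel]
  rw [hshift]
  exact hC (z - m) (by simpa using hzm)

theorem norm_iterate_sub_le {F : Type*} [SeminormedAddCommGroup F] {f : F → F} {C : ℝ}
    (hC : ∀ z, ‖f z - z‖ ≤ C) (k : ℕ) (z : F) : ‖f^[k] z - z‖ ≤ C * k := by
  induction k with
  | zero => simp
  | succ k ih =>
    rw [Function.iterate_succ_apply']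
    calc ‖f (f^[k] z) - z‖ ≤ ‖f (f^[k] z) - f^[k] z‖ + ‖f^[k] z - z‖ :=
          norm_sub_le_norm_sub_add_norm_sub _ _ _
      _ ≤ C + C * k := add_le_add (hC _) ih
      _ = C * ↑(k + 1) := by push_cast; ring

section RotationSet

variable {d : ℕ} {G : E d → E d} {U : Set (E d)}

theorem eventually_forall_average_mem {C : ℝ} (hC : ∀ z, ‖G z - z‖ ≤ C) {O : Set (E d)}
    (hO : IsOpen O) (hsub : rotRel G U ⊆ O) :
    ∀ᶠ k : ℕ in atTop, ∀ z ∈ U, (k : ℝ)⁻¹ • (G^[k] z - z) ∈ O := by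
  by_contra hcon
  obtain ⟨n, hn, hmem⟩ := extraction_of_frequently_atTop (not_eventually.1 hcon)
  push Not at hmem
  choose z hzU hzO using hmem
  have hbdd (i : ℕ) : (n i : ℝ)⁻¹ • (G^[n i] (z i) - z i) ∈ closedBall 0 C := by
    rw [mem_closedBall_zero_iff, norm_smul, norm_inv, RCLike.norm_natCast]
    exact inv_mul_le_of_le_mul₀ (by positivity) ((norm_nonneg _).trans (hC 0))
      ((norm_iterate_sub_le hC _ _).trans_eq (mul_comm _ _))
  obtain ⟨ρ, -, φ, hφ, hlim⟩ := (isCompact_closedBall 0 C).tendsto_subseq hbdd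
  have hρ : ρ ∈ rotRel G U :=
    ⟨n ∘ φ, z ∘ φ, (hn.comp hφ).tendsto_atTop, fun i => hzU (φ i), hlim⟩
  exact hO.isClosed_compl.mem_of_tendsto hlim (.of_forall fun i => hzO (φ i)) (hsub hρ)

theorem rotRel_nonempty {C : ℝ} (hC : ∀ z, ‖G z - z‖ ≤ C) (hU : U.Nonempty) :
    (rotRel G U).Nonempty := by
  by_contra hempty
  obtain ⟨z, hz⟩ := hU
  obtain ⟨_, hk⟩ :=
    (eventually_forall_average_mem hC isOpen_empty (not_nonempty_iff_eq_empty.1 hempty).le).exists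
  exact hk z hz

theorem rotRel_closure_subset (hG : Continuous G) : rotRel G (closure U) ⊆ rotRel G U := by
  rintro ρ ⟨n, z, hn, hz, hlim⟩
  have happrox (i : ℕ) : ∃ w ∈ U, ‖G^[n i] w - w - (G^[n i] (z i) - z i)‖ < 1 := by
    have hcont : Continuous fun w => ‖G^[n i] w - w - (G^[n i] (z i) - z i)‖ :=
      (((hG.iterate (n i)).sub continuous_id).sub continuous_const).norm
    obtain ⟨w, hw, hwU⟩ := mem_closure_iff.1 (hz i) _
      (isOpen_Iio (a := 1).preimage hcont) (by simp)
    exact ⟨w, hwU, hw⟩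
  choose w hwU hw using happrox
  refine ⟨n, w, hn, hwU, ?_⟩
  have hinv : Tendsto (fun i => (n i : ℝ)⁻¹) atTop (𝓝 0) := tendsto_inv_atTop_nhds_zero_nat.comp hn
  have hdiff : Tendsto (fun i => (n i : ℝ)⁻¹ • (G^[n i] (w i) - w i - (G^[n i] (z i) - z i)))
      atTop (𝓝 0) :=
    hinv.zero_smul_isBoundedUnder_le <| isBoundedUnder_of ⟨1, fun i => (hw i).le⟩
  simpa only [← smul_add, sub_add_cancel, zero_add] using hdiff.add hlim

theorem apply_nonpos_of_bddAbove_forwardOrbit (hU : Bornology.IsBounded U) (φ : E d →L[ℝ] ℝ)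
    (hφ : BddAbove (φ '' forwardOrbit G U)) {ρ : E d} (hρ : ρ ∈ rotRel G U) : φ ρ ≤ 0 := by
  obtain ⟨n, z, hn, hz, hlim⟩ := hρ
  obtain ⟨B, hB⟩ := hφ
  obtain ⟨D, hD⟩ := (hU.image φ).bddBelow
  have hinv : Tendsto (fun i => (n i : ℝ)⁻¹ * (B - D)) atTop (𝓝 0) := by
    simpa using (tendsto_inv_atTop_nhds_zero_nat.comp hn).mul_const (B - D)
  refine le_of_tendsto_of_tendsto' ((φ.continuous.tendsto ρ).comp hlim) hinv fun i => ?_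
  simp only [Function.comp_apply, map_smul, map_sub, smul_eq_mul]
  gcongr
  · exact hB (mem_image_of_mem φ (mem_forwardOrbit.2 ⟨n i, z i, hz i, rfl⟩))
  · exact hD (mem_image_of_mem φ (hz i))

end RotationSet

/-- The real-valued observable `x` grows at speed `L` along the `f`-orbits starting in `U`,
uniformly in the starting point: `x (f^[k] z) = k * L + o(k)`. -/
def UniformDrift {α : Type*} (f : α → α) (x : α → ℝ) (U : Set α) (L : ℝ) : Prop :=
  ∀ η > 0, ∀ᶠ k : ℕ in atTop, ∀ z ∈ U, |x (f^[k] z) - k * L| ≤ η * k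

theorem uniformDrift_of_rotRel_subset {d : ℕ} {G : E d → E d} {U : Set (E d)} {C : ℝ}
    (hC : ∀ z, ‖G z - z‖ ≤ C) (hU : Bornology.IsBounded U) (φ : E d →L[ℝ] ℝ) {L : ℝ}
    (hrot : ∀ ρ ∈ rotRel G U, φ ρ = L) : UniformDrift G φ U L := by
  intro η hη
  obtain ⟨D, hD⟩ := (hU.image φ).exists_norm_le
  have hO : IsOpen {ρ | |φ ρ - L| < η / 2} :=
    isOpen_lt (φ.continuous.sub continuous_const).abs continuous_const
  have hsub : rotRel G U ⊆ {ρ | |φ ρ - L| < η / 2} := fun ρ hρ => by simp [hrot ρ hρ, hη]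
  filter_upwards [eventually_forall_average_mem hC hO hsub, eventually_gt_atTop 0,
    tendsto_natCast_atTop_atTop.eventually_ge_atTop (2 * D / η)] with k hk hk0 hkD z hz
  have hk0' : (0 : ℝ) < k := by exact_mod_cast hk0
  have hφz : |φ z| ≤ η / 2 * k := by
    rw [div_le_iff₀ hη] at hkD
    exact (hD _ (mem_image_of_mem φ hz)).trans (by linarith)
  have hlt : |φ (G^[k] z) - φ z - k * L| < η / 2 * k := by
    have : |φ ((k : ℝ)⁻¹ • (G^[k] z - z)) - L| < η / 2 := hk z hz
    rw [map_smul, map_sub, smul_eq_mul] at this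
    calc |φ (G^[k] z) - φ z - k * L| = |(k : ℝ)⁻¹ * (φ (G^[k] z) - φ z) - L| * k := by
          rw [← abs_of_pos hk0', ← abs_mul, abs_of_pos hk0']
          congr 1
          field_simp
      _ < η / 2 * k := by gcongr
  rw [abs_le] at hφz ⊢
  rw [abs_lt] at hlt
  constructor <;> linarith

namespace UniformDrift

variable {α : Type*} {f : α → α} {x : α → ℝ} {U : Set α} {L : ℝ}

theorem eventually_lt (h : UniformDrift f x U L) (hL : 0 < L) (M : ℝ) :
    ∀ᶠ k : ℕ in atTop, ∀ z ∈ U, M < x (f^[k] z) := by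
  filter_upwards [h (L / 2) (half_pos hL),
    tendsto_natCast_atTop_atTop.eventually_gt_atTop (2 * M / L)] with k hk hkM z hz
  rw [div_lt_iff₀ hL] at hkM
  linarith [(abs_le.1 (hk z hz)).1]

theorem exists_mem_forwardOrbit_gt (h : UniformDrift f x U L) (hL : 0 < L) (hU : U.Nonempty)
    (M : ℝ) : ∃ q ∈ forwardOrbit f U, M < x q := by
  obtain ⟨k, hk⟩ := (h.eventually_lt hL M).exists
  obtain ⟨z, hz⟩ := hU
  exact ⟨f^[k] z, mem_forwardOrbit.2 ⟨k, z, hz, rfl⟩, hk z hz⟩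

theorem exists_isCompact_forwardOrbit_inter_subset [TopologicalSpace α]
    (h : UniformDrift f x U L) (hL : 0 < L) (hf : Continuous f) (hU : IsCompact U) (M : ℝ) :
    ∃ K, IsCompact K ∧ forwardOrbit f U ∩ {p | x p ≤ M} ⊆ K := by
  obtain ⟨N, hN⟩ := eventually_atTop.1 (h.eventually_lt hL M)
  refine ⟨⋃ k ∈ Iio N, f^[k] '' U,
    (finite_Iio N).isCompact_biUnion fun k _ => hU.image (hf.iterate k), ?_⟩
  rintro p ⟨hp, hpM⟩
  obtain ⟨k, z, hz, rfl⟩ := mem_forwardOrbit.1 hp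
  exact mem_biUnion (lt_of_not_ge fun hk => (hN k hk z hz).not_ge hpM) (mem_image_of_mem _ hz)

theorem exists_eventually_time_le (h : UniformDrift f x U L) (hL : 0 < L) {δ : ℝ} (hδ : 0 < δ) :
    ∃ ε > 0, ∀ᶠ n : ℕ in atTop, ∀ z ∈ U, ∀ j ≤ n, ∀ k : ℕ,
      x (f^[k] (f^[j] z)) ≤ j * L + ε * n → k ≤ δ * n := by
  have hη : 0 < δ * L / (4 * (1 + δ)) := by positivity
  set η := δ * L / (4 * (1 + δ)) with hη_def
  have hηδ : η * (1 + δ) = δ * L / 4 := by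
    rw [hη_def]
    field_simp
  obtain ⟨N, hN⟩ := eventually_atTop.1 (h η hη)
  refine ⟨δ * L / 4, by positivity, ?_⟩
  filter_upwards [tendsto_natCast_atTop_atTop.eventually_ge_atTop (N / δ), eventually_gt_atTop 0]
    with n hn hn0 z hz j hj k hx
  rw [← Function.iterate_add_apply] at hx
  by_contra! hk
  rw [div_le_iff₀ hδ] at hn
  have hNk : N ≤ k := by exact_mod_cast (hn.trans (by linarith) : (N : ℝ) ≤ k)
  have hlow := (abs_le.1 (hN (k + j) (by omega) z hz)).1
  push_cast at hlow
  have hn0' : (0 : ℝ) < n := by exact_mod_cast hn0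
  have hjn : η * j ≤ η * n := by gcongr
  have hηL : 0 < L - η := by nlinarith
  have hkn : δ * n * (L - η) < k * (L - η) := by gcongr
  have hηn : n * (η * (1 + δ)) = n * (δ * L / 4) := by rw [hηδ]
  nlinarith [mul_pos (mul_pos hn0' hδ) hL]

theorem exists_eventually_abs_sub_le {F : Type*} [NormedAddCommGroup F] [NormedSpace ℝ F]
    {f : F → F} {x : F → ℝ} {U : Set F} (h : UniformDrift f x U L) (hL : 0 < L) {C : ℝ}
    (hC : ∀ z, ‖f z - z‖ ≤ C) (y : F →L[ℝ] ℝ) {κ : ℝ} (hκ : 0 < κ) :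
    ∃ ε > 0, ∀ᶠ n : ℕ in atTop, ∀ z ∈ U, ∀ j ≤ n, ∀ k : ℕ,
      x (f^[k] (f^[j] z)) ≤ j * L + ε * n → |y (f^[k] (f^[j] z)) - y (f^[j] z)| ≤ κ * n := by
  have hC0 : 0 ≤ C := (norm_nonneg _).trans (hC 0)
  obtain ⟨ε, hε, htime⟩ := h.exists_eventually_time_le hL (δ := κ / (‖y‖ * C + 1)) (by positivity)
  refine ⟨ε, hε, htime.mono fun n hn z hz j hj k hx => ?_⟩
  calc |y (f^[k] (f^[j] z)) - y (f^[j] z)| = ‖y (f^[k] (f^[j] z) - f^[j] z)‖ := by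
        rw [map_sub, Real.norm_eq_abs]
    _ ≤ ‖y‖ * (C * k) := y.le_opNorm_of_le (norm_iterate_sub_le hC k _)
    _ = ‖y‖ * C * k := (mul_assoc _ _ _).symm
    _ ≤ (‖y‖ * C + 1) * (κ / (‖y‖ * C + 1) * n) := by
        gcongr
        · linarith
        · exact hn z hz j hj k hx
    _ = κ * n := by field_simp

end UniformDrift

/-! ### Comparison with a lattice translate -/

section Translate

variable {F : Type*} [NormedAddCommGroup F] [NormedSpace ℝ F] {f : F → F} {U : Set F}
  {e : F ≃L[ℝ] ℝ × ℝ} {L C : ℝ}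

theorem exists_mem_translate_above (hf : Continuous f) (hinj : Function.Injective f)
    (hUk : IsCompact U) (hU : IsConnected U) (hret : (f '' U ∩ U).Nonempty) {m : F}
    (hm : Function.Commute f (· + m)) {n : ℕ} {s h : ℝ}
    (hstart : ∀ z ∈ U, (e (z + m)).1 ≤ s ∧ -(h / 3) < (e z).2)
    (hend : ∀ z ∈ U, (e (f^[n] z)).1 ≤ s ∧ (e (f^[n] z)).2 + h ≤ (e m).2)
    (hslow_start : ∀ z ∈ U, ∀ k, (e (f^[k] z + m)).1 ≤ s → (e z).2 - h / 3 ≤ (e (f^[k] z)).2)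
    (hslow_end : ∀ z ∈ U, ∀ k, (e (f^[k] (f^[n] z))).1 ≤ s →
      (e (f^[k] (f^[n] z))).2 ≤ (e (f^[n] z)).2 + h / 3)
    (hh : 0 < h) (hfar : ∀ M, ∃ q ∈ forwardOrbit f U, M < (e q).1) {p : F}
    (hp : p ∈ forwardOrbit f (f^[n] '' U)) (hsp : s < (e p).1) :
    ∃ q ∈ forwardOrbit f U, (e (q + m)).1 = (e p).1 ∧ (e p).2 ≤ (e (q + m)).2 := by
  have hAe : ∀ a ∈ f^[n] '' U, (e a).1 ≤ s ∧ (e a).2 ≤ (e m).2 - h :=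
    forall_mem_image.2 fun u hu => ⟨(hend u hu).1, le_sub_iff_add_le.2 (hend u hu).2⟩
  have hBe : ∀ b ∈ (· + m) '' U, (e b).1 ≤ s ∧ (e m).2 - h / 3 ≤ (e b).2 :=
    forall_mem_image.2 fun u hu => ⟨(hstart u hu).1, by
      rw [map_add, Prod.snd_add]
      linarith [(hstart u hu).2]⟩
  have hAlow : ∀ p ∈ forwardOrbit f (f^[n] '' U), (e p).1 ≤ s → (e p).2 < (e m).2 - h / 3 := by
    intro p hp hps
    obtain ⟨k, _, ⟨u, hu, rfl⟩, rfl⟩ := mem_forwardOrbit.1 hp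
    linarith [hslow_end u hu k hps, (hend u hu).2]
  have hBhigh : ∀ q ∈ forwardOrbit f ((· + m) '' U), (e q).1 ≤ s → (e m).2 - h < (e q).2 := by
    rw [forwardOrbit_image_of_commute hm]
    rintro _ ⟨q, hq, rfl⟩ hqs
    obtain ⟨k, u, hu, rfl⟩ := mem_forwardOrbit.1 hq
    rw [map_add, Prod.snd_add]
    linarith [hslow_start u hu k hqs, (hstart u hu).2]
  have hBfar (M : ℝ) : ∃ q ∈ forwardOrbit f ((· + m) '' U), M < (e q).1 := by
    rw [forwardOrbit_image_of_commute hm, exists_mem_image]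
    obtain ⟨q, hq, hMq⟩ := hfar (M - (e m).1)
    exact ⟨q, hq, by rw [map_add, Prod.fst_add]; linarith⟩
  have habove := exists_mem_forwardOrbit_above hf hinj e.continuous e.injective
    (hUk.image (hf.iterate n)) (hU.image _ (hf.iterate n).continuousOn)
    (hUk.image (continuous_add_const m)) (hU.image _ (continuous_add_const m).continuousOn)
    (image_inter_image_nonempty_of_commute (Function.Commute.self_iterate f n) hret)
    (image_inter_image_nonempty_of_commute hm hret)
    hAe hBe (by linarith) hAlow hBhigh hBfar hp hsp
  rwa [forwardOrbit_image_of_commute hm, exists_mem_image] at habove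

theorem exists_eventually_mem_translate_above (hf : Continuous f)
    (hinj : Function.Injective f) (hC : ∀ z, ‖f z - z‖ ≤ C) (hUk : IsCompact U)
    (hU : IsConnected U) (hret : (f '' U ∩ U).Nonempty) (hL : 0 < L)
    (hdrift : UniformDrift f (fun z => (e z).1) U L) {κ : ℝ} (hκ : 0 < κ) (R : ℝ) :
    ∃ ε, ∀ᶠ n : ℕ in atTop, ∀ m, Function.Commute f (· + m) → |(e m).1 - n * L| ≤ R →
      (∀ z ∈ U, (e (f^[n] z)).2 + κ * n ≤ (e m).2) →
      ∀ p ∈ forwardOrbit f (f^[n] '' U), n * L + ε * n < (e p).1 →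
        ∃ q ∈ forwardOrbit f U, (e (q + m)).1 = (e p).1 ∧ (e p).2 ≤ (e (q + m)).2 := by
  obtain ⟨ε, hε, hslow⟩ := hdrift.exists_eventually_abs_sub_le hL hC
    ((ContinuousLinearMap.snd ℝ ℝ ℝ).comp e.toContinuousLinearMap) (κ := κ / 3) (by positivity)
  obtain ⟨D, hD⟩ := hUk.exists_bound_of_continuousOn e.continuous.continuousOn
  have hX (z) (hz : z ∈ U) := abs_le.1 ((norm_fst_le (e z)).trans (hD z hz))
  have hY (z) (hz : z ∈ U) := abs_le.1 ((norm_snd_le (e z)).trans (hD z hz))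
  refine ⟨ε / 2, ?_⟩
  filter_upwards [hslow, hdrift (ε / 2) (half_pos hε), eventually_gt_atTop 0,
    tendsto_natCast_atTop_atTop.eventually_ge_atTop ((|D| + |R|) / (ε / 2)),
    tendsto_natCast_atTop_atTop.eventually_gt_atTop (D / (κ / 3))]
    with n hslow hdrift_n hn0 hDR hDκ m hm hmx hmy p hp hpx
  rw [div_le_iff₀ (half_pos hε)] at hDR
  rw [div_lt_iff₀ (by positivity)] at hDκ
  rw [abs_le] at hmx
  have hslow_abs {z} (hz : z ∈ U) {j} (hj : j ≤ n) (k : ℕ)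
      (hx : (e (f^[k] (f^[j] z))).1 ≤ j * L + ε * n) :
      |(e (f^[k] (f^[j] z))).2 - (e (f^[j] z)).2| ≤ κ * n / 3 :=
    (hslow z hz j hj k hx).trans_eq (by ring)
  refine exists_mem_translate_above hf hinj hUk hU hret hm (n := n) (s := n * L + ε / 2 * n)
    (h := κ * n) (fun z hz => ?_) (fun z hz => ?_) (fun z hz k hk => ?_) (fun z hz k hk => ?_)
    (by positivity) (hdrift.exists_mem_forwardOrbit_gt hL hU.nonempty) hp hpx
  · rw [map_add, Prod.fst_add]
    exact ⟨by linarith [(hX z hz).2, le_abs_self D, le_abs_self R], by linarith [(hY z hz).1]⟩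
  · exact ⟨by linarith [(abs_le.1 (hdrift_n z hz)).2], hmy z hz⟩
  · rw [map_add, Prod.fst_add] at hk
    have hxk : (e (f^[k] (f^[0] z))).1 ≤ (0 : ℕ) * L + ε * n := by
      rw [Function.iterate_zero_apply, Nat.cast_zero, zero_mul, zero_add]
      linarith [le_abs_self R, abs_nonneg D]
    have := (abs_le.1 (hslow_abs hz n.zero_le k hxk)).1
    rw [Function.iterate_zero_apply] at this
    linarith
  · have hεn : 0 ≤ ε * n := by positivity
    have := (abs_le.1 (hslow_abs hz le_rfl k (by linarith))).2
    linarith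

theorem le_of_descent {α : Type*} {S : Set α} {x φ : α → ℝ} {B K δ : ℝ} (hδ : 0 < δ)
    (hK : ∀ s ∈ S, K ≤ x s)
    (hdesc : ∀ s ∈ S, φ s ≤ B ∨ ∃ t ∈ S, x t ≤ x s - δ ∧ φ s ≤ φ t) : ∀ s ∈ S, φ s ≤ B := by
  have hind (N : ℕ) : ∀ s ∈ S, x s < K + N * δ → φ s ≤ B := by
    induction N with
    | zero => exact fun s hs hlt => absurd (hK s hs) (by simpa using hlt)
    | succ N ih =>
      intro s hs hlt
      obtain h | ⟨t, ht, hxt, hφ⟩ := hdesc s hs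
      · exact h
      · push_cast at hlt
        exact hφ.trans (ih t ht (by linarith))
  intro s hs
  obtain ⟨N, hN⟩ := exists_nat_gt ((x s - K) / δ)
  rw [div_lt_iff₀ hδ] at hN
  exact hind N s hs (by linarith)

theorem eventually_bddAbove_image_forwardOrbit (hf : Continuous f)
    (hinj : Function.Injective f) (hC : ∀ z, ‖f z - z‖ ≤ C) (hUk : IsCompact U)
    (hU : IsConnected U) (hret : (f '' U ∩ U).Nonempty) (hL : 0 < L)
    (hdrift : UniformDrift f (fun z => (e z).1) U L) {κ : ℝ} (hκ : 0 < κ) (R : ℝ) :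
    ∀ᶠ n : ℕ in atTop, ∀ m, Function.Commute f (· + m) → |(e m).1 - n * L| ≤ R →
      (∀ z ∈ U, (e (f^[n] z)).2 + κ * n ≤ (e m).2) →
      BddAbove ((fun p => (e m).1 * (e p).2 - (e m).2 * (e p).1) '' forwardOrbit f U) := by
  obtain ⟨ε, habove⟩ :=
    exists_eventually_mem_translate_above hf hinj hC hUk hU hret hL hdrift hκ R
  filter_upwards [habove, tendsto_natCast_atTop_atTop.eventually_gt_atTop (R / L)]
    with n habove hRL m hm hmx hmy
  rw [div_lt_iff₀ hL] at hRL
  have hmx0 : 0 < (e m).1 := by linarith [(abs_le.1 hmx).1]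
  set φ : F → ℝ := fun p => (e m).1 * (e p).2 - (e m).2 * (e p).1 with hφ
  have hφ_cont : Continuous φ := by fun_prop
  obtain ⟨K, hK, hKsub⟩ :=
    hdrift.exists_isCompact_forwardOrbit_inter_subset hL hf hUk (n * L + ε * n)
  obtain ⟨K₀, hK₀, hKsub₀⟩ := hdrift.exists_isCompact_forwardOrbit_inter_subset hL hf hUk 0
  have hinit : IsCompact (⋃ k ∈ Iio n, f^[k] '' U) :=
    (finite_Iio n).isCompact_biUnion fun k _ => hUk.image (hf.iterate k)
  obtain ⟨B, hB⟩ := (hK.union hinit).bddAbove_image hφ_cont.continuousOn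
  obtain ⟨b, hb⟩ : BddBelow ((fun p => (e p).1) '' K₀) := hK₀.bddBelow_image (by fun_prop)
  have hlow (p : F) (hp : p ∈ forwardOrbit f U) : min b 0 ≤ (e p).1 := by
    obtain hp0 | hp0 := le_total (e p).1 0
    · exact min_le_of_left_le (hb (mem_image_of_mem _ (hKsub₀ ⟨hp, hp0⟩)))
    · exact min_le_of_right_le hp0
  -- Passing from `p` to `q` lowers the first coordinate by that of `m`, but it does not lower `φ`,
  -- which is invariant under translation by `m`.
  refine ⟨B, forall_mem_image.2 (le_of_descent hmx0 hlow fun p hp => ?_)⟩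
  obtain hps | hps := le_or_gt (e p).1 (n * L + ε * n)
  · exact .inl (hB (mem_image_of_mem φ (.inl (hKsub ⟨hp, hps⟩))))
  obtain hp_init | hp_late := forwardOrbit_subset_union f U n hp
  · exact .inl (hB (mem_image_of_mem φ (.inr hp_init)))
  obtain ⟨q, hq, hqx, hqy⟩ := habove m hm hmx hmy p hp_late hps
  refine .inr ⟨q, hq, ?_, ?_⟩
  · rw [map_add, Prod.fst_add] at hqx
    linarith
  · calc φ p ≤ φ (q + m) := by simp only [hφ, hqx]; gcongr
      _ = φ q := by simp only [hφ, map_add, Prod.fst_add, Prod.snd_add]; ring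

end Translate

section LatticePeriodic

variable {G : E 2 → E 2} {U : Set (E 2)} {e : E 2 ≃L[ℝ] ℝ × ℝ} {L : ℝ}

theorem eventually_mul_snd_le_of_isCompact (hG : Continuous G) (hinj : Function.Injective G)
    (hper : ∀ z, ∀ m ∈ ZLat 2, G (z + m) = G z + m) (hUk : IsCompact U) (hU : IsConnected U)
    (hret : (G '' U ∩ U).Nonempty) (hL : 0 < L) (hrot : ∀ ρ ∈ rotRel G U, (e ρ).1 = L) {ρ : E 2}
    (hρ : ρ ∈ rotRel G U) {κ : ℝ} (hκ : 0 < κ) :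
    ∀ᶠ n : ℕ in atTop, ∀ M, (∀ z ∈ U, (e (G^[n] z)).2 ≤ M) → n * (e ρ).2 ≤ M + κ * n := by
  obtain ⟨C, hC⟩ := exists_norm_apply_sub_le hG hper
  obtain ⟨R, hR⟩ := exists_mem_ZLat_abs_sub_le e
  have hdrift : UniformDrift G (fun z => (e z).1) U L := uniformDrift_of_rotRel_subset hC
    hUk.isBounded ((ContinuousLinearMap.fst ℝ ℝ ℝ).comp e.toContinuousLinearMap) hrot
  filter_upwards [eventually_bddAbove_image_forwardOrbit hG hinj hC hUk hU hret hL hdrift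
      (half_pos hκ) R,
    tendsto_natCast_atTop_atTop.eventually_ge_atTop ((2 * R + R * |(e ρ).2| / L) / (κ / 2))]
    with n hbdd hn M hM
  rw [div_le_iff₀ (half_pos hκ)] at hn
  obtain ⟨m, hm, hmx, hmy⟩ := hR (n * L) (M + κ / 2 * n + R)
  rw [abs_le] at hmy
  have hnonpos : (e m).1 * (e ρ).2 - (e m).2 * (e ρ).1 ≤ 0 :=
    apply_nonpos_of_bddAbove_forwardOrbit hUk.isBounded
      ((e m).1 • (ContinuousLinearMap.snd ℝ ℝ ℝ).comp e.toContinuousLinearMap -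
        (e m).2 • (ContinuousLinearMap.fst ℝ ℝ ℝ).comp e.toContinuousLinearMap)
      (hbdd m (hper · m hm) hmx fun z hz => by linarith [hM z hz]) hρ
  rw [hrot ρ hρ] at hnonpos
  have hcross : n * L * (e ρ).2 - (e m).1 * (e ρ).2 ≤ R * |(e ρ).2| := by
    rw [← sub_mul, ← neg_sub, neg_mul]
    refine (neg_le_abs _).trans ?_
    rw [abs_mul]
    gcongr
  have hmul : n * (e ρ).2 * L ≤ (M + κ / 2 * n + 2 * R + R * |(e ρ).2| / L) * L := by
    have hcancel : R * |(e ρ).2| / L * L = R * |(e ρ).2| := div_mul_cancel₀ _ hL.ne'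
    have hmyL : (e m).2 * L ≤ (M + κ / 2 * n + 2 * R) * L := by gcongr; linarith
    linarith
  linarith [le_of_mul_le_mul_right hmul hL]

theorem eventually_mul_snd_le_of_pos (hG : Continuous G) (hinj : Function.Injective G)
    (hper : ∀ z, ∀ m ∈ ZLat 2, G (z + m) = G z + m) (hUb : Bornology.IsBounded U)
    (hU : IsConnected U) (hret : (G '' U ∩ U).Nonempty) (hL : 0 < L)
    (hrot : ∀ ρ ∈ rotRel G U, (e ρ).1 = L) {ρ : E 2} (hρ : ρ ∈ rotRel G U) {κ : ℝ} (hκ : 0 < κ) :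
    ∀ᶠ n : ℕ in atTop, ∀ M, (∀ z ∈ U, (e (G^[n] z)).2 ≤ M) → n * (e ρ).2 ≤ M + κ * n := by
  have hsub : U ⊆ closure U := subset_closure
  have hret' : (G '' closure U ∩ closure U).Nonempty :=
    hret.mono (inter_subset_inter (image_mono hsub) hsub)
  have hρ' : ρ ∈ rotRel G (closure U) := by
    obtain ⟨n, z, hn, hz, hlim⟩ := hρ
    exact ⟨n, z, hn, fun i => hsub (hz i), hlim⟩
  filter_upwards [eventually_mul_snd_le_of_isCompact hG hinj hper hUb.isCompact_closure hU.closure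
    hret' hL (fun ρ hρ => hrot ρ (rotRel_closure_subset hG hρ)) hρ' hκ] with n hn M hM
  have hclosed : IsClosed {z | (e (G^[n] z)).2 ≤ M} :=
    isClosed_le (e.continuous.comp (hG.iterate n)).snd continuous_const
  exact hn M (closure_minimal hM hclosed)

theorem eventually_mul_snd_le (hG : Continuous G) (hinj : Function.Injective G)
    (hper : ∀ z, ∀ m ∈ ZLat 2, G (z + m) = G z + m) (hUb : Bornology.IsBounded U)
    (hU : IsConnected U) (hret : (G '' U ∩ U).Nonempty) (hL : L ≠ 0)
    (hrot : ∀ ρ ∈ rotRel G U, (e ρ).1 = L) {ρ : E 2} (hρ : ρ ∈ rotRel G U) {κ : ℝ} (hκ : 0 < κ) :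
    ∀ᶠ n : ℕ in atTop, ∀ M, (∀ z ∈ U, (e (G^[n] z)).2 ≤ M) → n * (e ρ).2 ≤ M + κ * n := by
  obtain hneg | hpos := hL.lt_or_gt
  · exact eventually_mul_snd_le_of_pos
      (e := e.trans ((ContinuousLinearEquiv.neg ℝ).prodCongr (.refl ℝ ℝ)))
      hG hinj hper hUb hU hret (neg_pos.2 hneg) (fun ρ hρ => congrArg Neg.neg (hrot ρ hρ)) hρ hκ
  · exact eventually_mul_snd_le_of_pos hG hinj hper hUb hU hret hpos hrot hρ hκ

theorem eventually_le_mul_snd (hG : Continuous G) (hinj : Function.Injective G)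
    (hper : ∀ z, ∀ m ∈ ZLat 2, G (z + m) = G z + m) (hUb : Bornology.IsBounded U)
    (hU : IsConnected U) (hret : (G '' U ∩ U).Nonempty) (hL : L ≠ 0)
    (hrot : ∀ ρ ∈ rotRel G U, (e ρ).1 = L) {ρ : E 2} (hρ : ρ ∈ rotRel G U) {κ : ℝ} (hκ : 0 < κ) :
    ∀ᶠ n : ℕ in atTop, ∀ M, (∀ z ∈ U, M ≤ (e (G^[n] z)).2) → M - κ * n ≤ n * (e ρ).2 := by
  filter_upwards [eventually_mul_snd_le
    (e := e.trans ((ContinuousLinearEquiv.refl ℝ ℝ).prodCongr (.neg ℝ)))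
    hG hinj hper hUb hU hret hL hrot hρ hκ] with n hn M hM
  have hreflect : n * -(e ρ).2 ≤ -M + κ * n := hn (-M) fun z hz => neg_le_neg (hM z hz)
  linarith

end LatticePeriodic

/-! ### Linear spreading -/

theorem sdot_self_ne_zero {v : E 2} (hv : v ≠ 0) : sdot v v ≠ 0 := by
  have hnorm : sdot v v = ‖v‖ ^ 2 := by
    simp [EuclideanSpace.norm_sq_eq, Fin.sum_univ_two, sdot, ← sq]
  rw [hnorm]
  exact pow_ne_zero 2 (norm_ne_zero_iff.2 hv)

/-- The linear coordinates `z ↦ (⟨z, v⟩, ⟨z, v^⊥⟩)` on the plane, for `v ≠ 0`. -/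
def dotCoords (v : E 2) (hv : v ≠ 0) : E 2 ≃L[ℝ] ℝ × ℝ :=
  have hvv : v 0 ^ 2 + v 1 ^ 2 ≠ 0 := by simpa only [sdot, ← sq] using sdot_self_ne_zero hv
  LinearEquiv.toContinuousLinearEquiv
    { toFun := fun z => (sdot v z, pdot v z)
      map_add' := fun z w => by
        ext <;> simp only [sdot, pdot, PiLp.add_apply, Prod.mk_add_mk] <;> ring
      map_smul' := fun c z => by
        ext <;> simp only [sdot, pdot, PiLp.smul_apply, Prod.smul_mk, smul_eq_mul,
          RingHom.id_apply] <;> ring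
      invFun := fun p => (v 0 ^ 2 + v 1 ^ 2)⁻¹ • !₂[p.1 * v 0 - p.2 * v 1, p.1 * v 1 + p.2 * v 0]
      left_inv := fun z => by
        ext i
        fin_cases i <;> simp [sdot, pdot] <;> field_simp <;> ring
      right_inv := fun p => by
        ext <;> simp [sdot, pdot] <;> field_simp <;> ring }

theorem lineSeg_nontrivial {lam a b : ℝ} {v : E 2} (hlam : lam ≠ 0) (hv : v ≠ 0) (hab : a < b)
    (hne : (lineSeg lam v a b).Nonempty) : (lineSeg lam v a b).Nontrivial := by
  let e := dotCoords v hv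
  let L := lam * sdot v v
  have mem_iff (y : ℝ) : e.symm (L, y) ∈ lineSeg lam v a b ↔ a * L ≤ y ∧ y ≤ b * L := by
    have he : (sdot v (e.symm (L, y)), pdot v (e.symm (L, y))) = (L, y) := e.apply_symm_apply _
    obtain ⟨hs, hp⟩ := Prod.mk.inj he
    simp [lineSeg, lineL, hs, hp, L]
  obtain ⟨z, hz : sdot v z = L, hza, hzb⟩ := hne
  have hLab : a * L ≤ b * L := hz ▸ hza.trans hzb
  have hL : L ≠ 0 := mul_ne_zero hlam (sdot_self_ne_zero hv)
  refine ⟨e.symm (L, a * L), (mem_iff _).2 ⟨le_rfl, hLab⟩, e.symm (L, b * L),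
    (mem_iff _).2 ⟨hLab, le_rfl⟩, e.symm.injective.ne fun heq => ?_⟩
  exact hab.ne (mul_right_cancel₀ hL (Prod.mk.inj heq).2)

theorem linear_spreading_general {G : E 2 → E 2} (hG : Continuous G)
    (hinj : Function.Injective G) (hper : ∀ z, ∀ m ∈ ZLat 2, G (z + m) = G z + m) {U : Set (E 2)}
    (hUb : Bornology.IsBounded U) (hU : IsConnected U) (hret : (G '' U ∩ U).Nonempty) {lam : ℝ}
    (hlam : lam ≠ 0) {v : E 2} (hv : v ≠ 0) (hline : rotRel G U ⊆ lineL lam v)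
    (hrot : (rotRel G U).Nontrivial) :
    ∃ c > (0 : ℝ), ∃ N' : ℕ, ∀ n ≥ N', sSup ((fun z => pdot v (G^[n] z)) '' U) -
      sInf ((fun z => pdot v (G^[n] z)) '' U) > c * n := by
  let e := dotCoords v hv
  have hL : lam * sdot v v ≠ 0 := mul_ne_zero hlam (sdot_self_ne_zero hv)
  obtain ⟨ρ, hρ, ρ', hρ', hlt⟩ : ∃ ρ ∈ rotRel G U, ∃ ρ' ∈ rotRel G U, pdot v ρ' < pdot v ρ := by
    obtain ⟨ρ, hρ, ρ', hρ', hne⟩ := hrot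
    have hpdot : pdot v ρ ≠ pdot v ρ' := fun heq =>
      hne (e.injective (Prod.ext ((hline hρ).trans (hline hρ').symm) heq))
    obtain h | h := hpdot.lt_or_gt
    · exact ⟨ρ', hρ', ρ, hρ, h⟩
    · exact ⟨ρ, hρ, ρ', hρ', h⟩
  set c := (pdot v ρ - pdot v ρ') / 4 with hc_def
  have hc : 0 < c := div_pos (sub_pos.2 hlt) four_pos
  refine ⟨c, hc, eventually_atTop.1 ?_⟩
  filter_upwards [eventually_mul_snd_le (e := e) hG hinj hper hUb hU hret hL hline hρ hc,
    eventually_le_mul_snd (e := e) hG hinj hper hUb hU hret hL hline hρ' hc, eventually_gt_atTop 0]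
    with n hupper hlower hn
  have hbdd : Bornology.IsBounded ((fun z => pdot v (G^[n] z)) '' U) :=
    (hUb.isCompact_closure.image (e.continuous.comp (hG.iterate n)).snd).isBounded.subset
      (image_mono subset_closure)
  have hsup := hupper _ fun z hz => le_csSup hbdd.bddAbove (mem_image_of_mem _ hz)
  have hinf := hlower _ fun z hz => csInf_le hbdd.bddBelow (mem_image_of_mem _ hz)
  have hcn : 0 < c * n := by positivity
  have hgap : n * (e ρ).2 - n * (e ρ').2 = 4 * (c * n) := by
    change n * pdot v ρ - n * pdot v ρ' = _
    rw [hc_def]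
    ring
  linarith

/-- **Corollary (linear spreading in the `v^⊥` direction).**
If `ρ_Û(G) = L_{λ,v}[a,b]` with `a < b`, then there are `c > 0` and `N'` such that
for all `n ≥ N'` the spread of `⟨G^n(z), v^⊥⟩` over `z ∈ Û` exceeds `c·n`. -/
theorem linear_spreading
    (G : E 2 ≃ₜ E 2) (g : T 2 ≃ₜ T 2) (hlift : IsLift G g)
    (Uh : Set (E 2)) (hUb : Bornology.IsBounded Uh) (hUc : IsConnected Uh)
    (hmeet : ((⇑G) '' Uh ∩ Uh).Nonempty)
    (lam : ℝ) (hlam : lam ≠ 0) (v : E 2) (hv : v ≠ 0) (a b : ℝ) (hab : a < b)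
    (hrot : rotRel (⇑G) Uh = lineSeg lam v a b) :
    ∃ c > (0 : ℝ), ∃ N' : ℕ, ∀ n ≥ N',
      sSup ((fun z => pdot v ((⇑G)^[n] z)) '' Uh) -
        sInf ((fun z => pdot v ((⇑G)^[n] z)) '' Uh) > c * n := by
  obtain ⟨C, hC⟩ := exists_norm_apply_sub_le G.continuous hlift.2
  exact linear_spreading_general G.continuous G.injective hlift.2 hUb hUc hmeet hlam hv
    (hrot ▸ fun _ hz => hz.1)
    (hrot ▸ lineSeg_nontrivial hlam hv hab (hrot ▸ rotRel_nonempty hC hUc.nonempty))
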